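/- Let σ : ℝ^M → ℝ be continuously differentiable with nonvanishing gradient at every point (i.e., σ is a C¹ submersion), and let X be a real M × N matrix with rank N. Consider the map G : ℝ^{M×M} × ℝ^M → ℝ^N defined by G(W, b)_i = σ(W X_i + b), where X_i is the i-th column of X. Then for every (W, b), the Fréchet derivative of G at (W, b) is a surjective linear map onto ℝ^N; equivalently, the N × (M² + M) Jacobian matrix D of G with respect to the parameters (W, b) has full rank N. -/

import Mathlib

open Matrix

/-!
The network is the composition of the map sending `(W, b)` to the preactivations `(W xᵢ + b)ᵢ`,
which is linear in the parameters, with `σ` applied to each preactivation. The first map is onto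
because the values of an affine map at affinely independent points can be prescribed freely. The
derivative of the second is block diagonal, and each block is onto because `σ` is a submersion, so
the chain rule exhibits the derivative of the network as a composition of surjections.
-/

section Interpolation

variable {K V V' ι : Type*} [DivisionRing K]
  [AddCommGroup V] [Module K V] [AddCommGroup V'] [Module K V']

theorem exists_linearMap_apply_eq_of_linearIndependent {x : ι → V} (hx : LinearIndependent K x)
    (v : ι → V') : ∃ f : V →ₗ[K] V', ∀ i, f (x i) = v i := by
  obtain ⟨g, hg⟩ := (Finsupp.linearCombination K x).exists_leftInverse_of_injective
    (LinearMap.ker_eq_bot.2 hx)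
  refine ⟨Finsupp.linearCombination K v ∘ₗ g, fun i => ?_⟩
  have hgx : g (x i) = Finsupp.single i 1 := by
    simpa using LinearMap.congr_fun hg (Finsupp.single i 1)
  simp [hgx]

theorem exists_affineMap_apply_eq_of_affineIndependent {x : ι → V} (hx : AffineIndependent K x)
    (v : ι → V') : ∃ f : V →ᵃ[K] V', ∀ i, f (x i) = v i := by
  rcases isEmpty_or_nonempty ι with _ | ⟨⟨i₀⟩⟩
  · exact ⟨0, isEmptyElim⟩
  obtain ⟨L, hL⟩ := exists_linearMap_apply_eq_of_linearIndependent
    ((affineIndependent_iff_linearIndependent_vsub K x i₀).1 hx) fun i => v i - v i₀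
  refine ⟨L.toAffineMap + AffineMap.const K V (v i₀ - L (x i₀)), fun i => ?_⟩
  have hdiff : L (x i) - L (x i₀) = v i - v i₀ := by
    rcases eq_or_ne i i₀ with rfl | hi
    · simp
    · simpa using hL ⟨i, hi⟩
  calc L (x i) + (v i₀ - L (x i₀)) = L (x i) - L (x i₀) + v i₀ := by abel
    _ = v i := by rw [hdiff, sub_add_cancel]

end Interpolation

theorem linearIndependent_col_of_rank_eq_card {R m n : Type*}
    [CommRing R] [Nontrivial R] [Fintype n]
    {A : Matrix m n R} (hA : A.rank = Fintype.card n) : LinearIndependent R A.col := by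
  rw [linearIndependent_iff_card_eq_finrank_span, ← hA, rank_eq_finrank_span_cols, Set.finrank]

section Preactivation

variable {𝕜 ι κ n : Type*} [NontriviallyNormedField 𝕜] [Fintype κ]

/-- The preactivations `i ↦ W xᵢ + b` of an affine layer at the inputs `x`, as a continuous linear
map of the parameters `(W, b)`; the weight matrix is encoded as a plain function `ι → κ → 𝕜`. -/
def preactivation (x : n → κ → 𝕜) : (ι → κ → 𝕜) × (ι → 𝕜) →L[𝕜] n → ι → 𝕜 where
  toFun p i α := (∑ j, p.1 α j * x i j) + p.2 α
  map_add' p q := by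
    ext i α
    simp only [Prod.fst_add, Prod.snd_add, Pi.add_apply, add_mul, Finset.sum_add_distrib]
    ring
  map_smul' c p := by
    ext i α
    simp [mul_add, Finset.mul_sum, mul_assoc]
  cont := by fun_prop

theorem preactivation_surjective {x : n → κ → 𝕜} (hx : AffineIndependent 𝕜 x) :
    Function.Surjective (preactivation (ι := ι) x) := by
  classical
  intro v
  obtain ⟨f, hf⟩ := exists_affineMap_apply_eq_of_affineIndependent hx v
  refine ⟨(LinearMap.toMatrix' f.linear, f 0), funext fun i => ?_⟩
  calc LinearMap.toMatrix' f.linear *ᵥ x i + f 0 = f.linear (x i) + f 0 := by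
        rw [LinearMap.toMatrix'_mulVec]
    _ = f (x i) := (congrFun f.decomp (x i)).symm
    _ = v i := hf i

end Preactivation

theorem hasFDerivAt_piMap {𝕜 n : Type*} [NontriviallyNormedField 𝕜] [Finite n]
    {E F : n → Type*} [∀ i, NormedAddCommGroup (E i)] [∀ i, NormedSpace 𝕜 (E i)]
    [∀ i, NormedAddCommGroup (F i)] [∀ i, NormedSpace 𝕜 (F i)]
    {σ : ∀ i, E i → F i} {σ' : ∀ i, E i →L[𝕜] F i} {z : ∀ i, E i}
    (hσ : ∀ i, HasFDerivAt (σ i) (σ' i) (z i)) :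
    HasFDerivAt (Pi.map σ) (ContinuousLinearMap.piMap σ') z := by
  have := Fintype.ofFinite n
  exact hasFDerivAt_pi.2 fun i => (hσ i).comp z (hasFDerivAt_apply i z)

theorem submersion_network_jacobian_full_rank_general {𝕜 ι κ n F : Type*}
    [NontriviallyNormedField 𝕜] [Finite ι] [Fintype κ] [Finite n]
    [NormedAddCommGroup F] [NormedSpace 𝕜 F]
    {x : n → κ → 𝕜} (hx : AffineIndependent 𝕜 x)
    {σ : (ι → 𝕜) → F} {σ' : n → (ι → 𝕜) →L[𝕜] F} {W : ι → κ → 𝕜} {b : ι → 𝕜}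
    (hσ : ∀ i, HasFDerivAt σ (σ' i) (fun α => (∑ j, W α j * x i j) + b α))
    (hσ' : ∀ i, Function.Surjective (σ' i)) :
    Function.Surjective
      (fderiv 𝕜
        (fun p : (ι → κ → 𝕜) × (ι → 𝕜) =>
          fun i : n => σ (fun α => (∑ j, p.1 α j * x i j) + p.2 α))
        (W, b)) := by
  have := Fintype.ofFinite ι
  have := Fintype.ofFinite n
  have hderiv : HasFDerivAt (Pi.map (fun _ => σ) ∘ preactivation x)
      (ContinuousLinearMap.piMap σ' ∘L preactivation x) (W, b) :=
    (hasFDerivAt_piMap hσ).comp (W, b) (preactivation x).hasFDerivAt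
  have hsurj : Function.Surjective (ContinuousLinearMap.piMap σ' ∘L preactivation x) :=
    (Function.Surjective.piMap hσ').comp (preactivation_surjective hx)
  exact hderiv.fderiv ▸ hsurj

theorem submersion_network_jacobian_full_rank {M N : ℕ}
    (σ : (Fin M → ℝ) → ℝ) (hσ : ContDiff ℝ 1 σ) (hsub : ∀ z, fderiv ℝ σ z ≠ 0)
    (X : Matrix (Fin M) (Fin N) ℝ) (hrank : X.rank = N) :
    ∀ (W : Fin M → Fin M → ℝ) (b : Fin M → ℝ),
      Function.Surjective
        (fderiv ℝ
          (fun p : (Fin M → Fin M → ℝ) × (Fin M → ℝ) =>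
            fun i : Fin N => σ (fun α => (∑ j, p.1 α j * X j i) + p.2 α))
          (W, b)) := by
  intro W b
  have hcol : LinearIndependent ℝ X.col :=
    linearIndependent_col_of_rank_eq_card (hrank.trans (Fintype.card_fin N).symm)
  have hsurj (z : Fin M → ℝ) : Function.Surjective (fderiv ℝ σ z) :=
    LinearMap.surjective (ContinuousLinearMap.coe_injective.ne (hsub z))
  exact submersion_network_jacobian_full_rank_general hcol.affineIndependent
    (fun _ => (hσ.differentiable one_ne_zero _).hasFDerivAt) fun _ => hsurj _
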